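/- Let f be a transcendental meromorphic function or a rational map of degree ≥ 2, let z ∈ Ĉ, R > 0, τ > 0, N ≥ 1, and let 0 < r < R. Then there exists M > 0 such that, for every n ≤ N, all holomorphic inverse branches g of f^{−n} defined on B(z,R) satisfy |Dg| < M on B(z,r); moreover, all but finitely many such inverse branches satisfy |Dg| < τ on B(z,r). Derivatives are taken with respect to the spherical metric. -/

import Mathlib

open Metric MeasureTheory Filter Set Function Topology ENNReal NNReal

noncomputable section
attribute [local instance] Classical.propDecidable

/-- An abstract model of the Riemann sphere `Ĉ`: a compact metric space carrying the
spherical (chordal) metric, an open embedding `ι` of `ℂ` whose complement is the single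
point `infty`, and the inversion `z ↦ 1/z` as a global homeomorphism. -/
structure SphereModel (𝕊 : Type) [MetricSpace 𝕊] [CompactSpace 𝕊] where
  ι : ℂ → 𝕊
  infty : 𝕊
  continuous_ι : Continuous ι
  injective_ι : Function.Injective ι
  range_ι : Set.range ι = {infty}ᶜ
  isOpenMap_ι : IsOpenMap ι
  sphereInv : 𝕊 → 𝕊
  continuous_sphereInv : Continuous sphereInv
  sphereInv_invol : ∀ x, sphereInv (sphereInv x) = x
  sphereInv_ι : ∀ z : ℂ, z ≠ 0 → sphereInv (ι z) = ι z⁻¹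
  sphereInv_zero : sphereInv (ι 0) = infty
  sphereInv_infty : sphereInv infty = ι 0
  dist_ι : ∀ z w : ℂ,
    dist (ι z) (ι w) = 2 * dist z w / (Real.sqrt (1 + ‖z‖ ^ 2) * Real.sqrt (1 + ‖w‖ ^ 2))
  dist_infty : ∀ z : ℂ, dist (ι z) infty = 2 / Real.sqrt (1 + ‖z‖ ^ 2)

namespace SphereModel

variable {𝕊 : Type} [MetricSpace 𝕊] [CompactSpace 𝕊]

/-- The partially defined inverse of `ι` (junk value at `infty`). -/
def toC (S : SphereModel 𝕊) : 𝕊 → ℂ := Function.invFun S.ι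

/-- The standard chart of the sphere around a point: the identity chart away from
`infty` and the chart `z ↦ 1/z` at `infty`. -/
def chart (S : SphereModel 𝕊) (w : 𝕊) : 𝕊 → ℂ :=
  if w = S.infty then S.toC ∘ S.sphereInv else S.toC

/-- Local inverse of `chart`. -/
def chartInv (S : SphereModel 𝕊) (w : 𝕊) : ℂ → 𝕊 :=
  if w = S.infty then S.sphereInv ∘ S.ι else S.ι

/-- `f : 𝕊 → 𝕊` is holomorphic at `x`, read through the standard charts. -/
def HolAt (S : SphereModel 𝕊) (f : 𝕊 → 𝕊) (x : 𝕊) : Prop :=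
  ContinuousAt f x ∧ AnalyticAt ℂ (S.chart (f x) ∘ f ∘ S.chartInv x) (S.chart x x)

/-- `f` represents a meromorphic function `ℂ → Ĉ`: it is holomorphic (as a sphere-valued
map) at every point of `ℂ`.  (The value of `f` at `infty` is junk.) -/
def MeromorphicDyn (S : SphereModel 𝕊) (f : 𝕊 → 𝕊) : Prop :=
  ∀ z : ℂ, S.HolAt f (S.ι z)

/-- `f` represents a transcendental meromorphic function: it is meromorphic on `ℂ` and
admits no holomorphic extension at `infty`. -/
def TranscendentalDyn (S : SphereModel 𝕊) (f : 𝕊 → 𝕊) : Prop :=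
  S.MeromorphicDyn f ∧
    ¬ ∃ g : 𝕊 → 𝕊, (∀ z : ℂ, g (S.ι z) = f (S.ι z)) ∧ S.HolAt g S.infty

/-- `f` represents a rational map of degree at least `2`: holomorphic on the whole sphere,
non-constant and non-injective. -/
def RationalDegGe2 (S : SphereModel 𝕊) (f : 𝕊 → 𝕊) : Prop :=
  (∀ x, S.HolAt f x) ∧ (∀ c, f ≠ fun _ => c) ∧ ¬ Function.Injective f

/-- `f` is a transcendental meromorphic function or a rational map of degree `≥ 2`. -/
def MeroOrRat (S : SphereModel 𝕊) (f : 𝕊 → 𝕊) : Prop :=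
  S.TranscendentalDyn f ∨ S.RationalDegGe2 f

/-- The domain of holomorphy of `f` (`ℂ` for transcendental maps, `Ĉ` for rational ones). -/
def dom (S : SphereModel 𝕊) (f : 𝕊 → 𝕊) : Set 𝕊 := {x | S.HolAt f x}

/-- `f^[n] z` is defined (all earlier iterates lie in the domain of `f`). -/
def DefinedUpTo (S : SphereModel 𝕊) (f : 𝕊 → 𝕊) (z : 𝕊) (n : ℕ) : Prop :=
  ∀ i < n, f^[i] z ∈ S.dom f

/-- The (partially defined) forward orbit of a point. -/
def orb (S : SphereModel 𝕊) (f : 𝕊 → 𝕊) (z : 𝕊) : Set 𝕊 :=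
  {w | ∃ n, S.DefinedUpTo f z n ∧ f^[n] z = w}

/-- The forward orbit of a set. -/
def orbSet (S : SphereModel 𝕊) (f : 𝕊 → 𝕊) (A : Set 𝕊) : Set 𝕊 :=
  ⋃ z ∈ A, S.orb f z

/-- The Fatou set: points with a neighbourhood on which all iterates are defined and form
a normal family (equivalently, on the compact sphere, an equicontinuous family). -/
def fatou (S : SphereModel 𝕊) (f : 𝕊 → 𝕊) : Set 𝕊 :=
  {x | ∃ U ∈ 𝓝 x, (∀ y ∈ U, ∀ n, S.DefinedUpTo f y n) ∧
      EquicontinuousOn (fun n : ℕ => f^[n]) U}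

/-- The Julia set: the complement of the Fatou set. -/
def julia (S : SphereModel 𝕊) (f : 𝕊 → 𝕊) : Set 𝕊 := (S.fatou f)ᶜ

/-- Singular values: `v` is not singular iff it has an open neighbourhood `W` on which
all inverse branches of `f` are well-defined univalent maps. -/
def singularValues (S : SphereModel 𝕊) (f : 𝕊 → 𝕊) : Set 𝕊 :=
  {v | ¬ ∃ W : Set 𝕊, IsOpen W ∧ v ∈ W ∧
      ∀ x ∈ S.dom f, f x ∈ W →
        ∃ g : 𝕊 → 𝕊, ContinuousOn g W ∧ Set.InjOn g W ∧ g (f x) = x ∧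
          ∀ w ∈ W, g w ∈ S.dom f ∧ f (g w) = w}

/-- The post-singular set `P(f)`. -/
def postSingular (S : SphereModel 𝕊) (f : 𝕊 → 𝕊) : Set 𝕊 :=
  closure (S.orbSet f (S.singularValues f))

end SphereModel

/-- The ω-limit set of a point under iteration. -/
def omegaLimitSet {α : Type*} [TopologicalSpace α] (f : α → α) (z : α) : Set α :=
  ⋂ n : ℕ, closure {w | ∃ k, n ≤ k ∧ f^[k] z = w}

/-- A nice set: an open set such that no boundary point ever enters the set. -/
def IsNice {α : Type*} [TopologicalSpace α] (f : α → α) (U : Set α) : Prop :=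
  IsOpen U ∧ ∀ n : ℕ, 0 < n → f^[n] '' frontier U ∩ U = ∅

/-- The norm of the derivative of `f` at `x` with respect to the underlying metric,
defined as the limsup of difference quotients (possibly `∞`). -/
def ednorm {α : Type*} [MetricSpace α] (f : α → α) (x : α) : ℝ≥0∞ :=
  Filter.limsup (fun y => edist (f y) (f x) / edist y x) (𝓝[≠] x)

/-- The norm of the derivative with respect to the Euclidean metric, read through `ι`
(`∞` at `infty` and at poles). -/
def ednormEuc {𝕊 : Type} [MetricSpace 𝕊] [CompactSpace 𝕊] (S : SphereModel 𝕊)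
    (f : 𝕊 → 𝕊) (x : 𝕊) : ℝ≥0∞ :=
  if x = S.infty ∨ f x = S.infty then ⊤
  else ENNReal.ofReal ‖deriv (fun w => S.toC (f (S.ι w))) (S.toC x)‖

/-- The family `𝒱_n(U, z, R)` of pullbacks of `U` by `f^n` that extend univalently over
`B(z,R)`. -/
def pullbackFam {α : Type*} [MetricSpace α] (f : α → α) (U : Set α) (z : α) (R : ℝ)
    (n : ℕ) : Set (Set α) :=
  {V | IsOpen V ∧ f^[n] '' V = U ∧
    ∃ V' : Set α, V ⊆ V' ∧ IsConnected V' ∧ Set.InjOn (f^[n]) V' ∧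
      f^[n] '' V' = Metric.ball z R}

/-- A `(t,p)`-conformal measure for `f`, with respect to the derivative norm `nd`
(spherical or Euclidean): finite on compact sets disjoint from the post-singular set,
with Jacobian `exp p * nd ^ t` wherever the latter is finite (`0 ^ 0 = 1` by the
`ENNReal.rpow` convention), and `m {x} = 0`, `m {f x}` zero or finite whenever
`nd x ^ t = ∞`. -/
def IsConformalMeasure {𝕊 : Type} [MetricSpace 𝕊] [CompactSpace 𝕊] [MeasurableSpace 𝕊]
    (S : SphereModel 𝕊) (f : 𝕊 → 𝕊) (t p : ℝ) (nd : 𝕊 → ℝ≥0∞) (m : Measure 𝕊) : Prop :=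
  (∀ K : Set 𝕊, IsCompact K → Disjoint K (S.postSingular f) → m K < ⊤) ∧
  (∀ A : Set 𝕊, MeasurableSet A → A ⊆ S.dom f → Set.InjOn f A →
      (∀ x ∈ A, nd x ^ t ≠ ⊤) →
      m (f '' A) = ∫⁻ x in A, ENNReal.ofReal (Real.exp p) * nd x ^ t ∂m) ∧
  (∀ x, nd x ^ t = ⊤ → m {x} = 0 ∧ (m {f x} = 0 ∨ m {f x} < ⊤))

/-- The set `E` of univalently inaccessible points. -/
def univInaccessible {𝕊 : Type} [MetricSpace 𝕊] [CompactSpace 𝕊] (S : SphereModel 𝕊)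
    (f : 𝕊 → 𝕊) : Set 𝕊 :=
  {z | ∃ U : Set 𝕊, IsOpen U ∧ (U ∩ S.julia f).Nonempty ∧
    ¬ ∃ (y : 𝕊) (n k : ℕ), y ∈ U ∧ f^[n] z = f^[k] y ∧
      0 < ednorm (f^[n]) z * ednorm (f^[k]) y ∧
      ednorm (f^[n]) z * ednorm (f^[k]) y < ⊤}

/-- A holomorphic inverse branch of `f^{-n}` on `W`. -/
def IsInvBranch {𝕊 : Type} [MetricSpace 𝕊] [CompactSpace 𝕊] (S : SphereModel 𝕊)
    (f : 𝕊 → 𝕊) (n : ℕ) (W : Set 𝕊) (g : 𝕊 → 𝕊) : Prop :=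
  (∀ w ∈ W, S.HolAt g w) ∧ ∀ w ∈ W, f^[n] (g w) = w

/-- The multiplier of `f^[n]` at a point `z`, computed in the standard chart at `z`. -/
def SphereModel.multiplier {𝕊 : Type} [MetricSpace 𝕊] [CompactSpace 𝕊]
    (S : SphereModel 𝕊) (f : 𝕊 → 𝕊) (n : ℕ) (z : 𝕊) : ℂ :=
  deriv (S.chart z ∘ f^[n] ∘ S.chartInv z) (S.chart z z)

/-- A parabolic periodic point: a periodic point whose cycle has multiplier a root of
unity. -/
def IsParabolicPeriodic {𝕊 : Type} [MetricSpace 𝕊] [CompactSpace 𝕊] (S : SphereModel 𝕊)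
    (f : 𝕊 → 𝕊) (z : 𝕊) : Prop :=
  ∃ n : ℕ, 0 < n ∧ f^[n] z = z ∧ ∃ k : ℕ, 0 < k ∧ S.multiplier f n z ^ k = 1

/-- `x` returns to `U` under iteration of `f`. -/
def Returns {α : Type*} (f : α → α) (U : Set α) (x : α) : Prop :=
  ∃ k, 1 ≤ k ∧ f^[k] x ∈ U

/-- The first return time to `U` (junk value `0` if the point never returns). -/
def returnTime {α : Type*} (f : α → α) (U : Set α) (x : α) : ℕ :=
  sInf {k | 1 ≤ k ∧ f^[k] x ∈ U}

/-- The first return map to `U` (the identity where undefined). -/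
def firstReturn {α : Type*} (f : α → α) (U : Set α) (x : α) : α :=
  f^[returnTime f U x] x

/-- The domain of the first return map. -/
def returnDom {α : Type*} (f : α → α) (U : Set α) : Set α :=
  {x ∈ U | Returns f U x}

/-- `Λ_U = ⋂_{k ≥ 0} φ_U^{-k}(U)`: points all of whose iterates under the first return
map are defined (and in `U`). -/
def LambdaSet {α : Type*} (f : α → α) (U : Set α) : Set α :=
  {x | ∀ k : ℕ, (firstReturn f U)^[k] x ∈ returnDom f U}

/-- `φ_U^{-k}(A)`, taking definedness of the first return map into account. -/
def phiPreimage {α : Type*} (f : α → α) (U : Set α) (k : ℕ) (A : Set α) : Set α :=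
  {x | (∀ i < k, (firstReturn f U)^[i] x ∈ returnDom f U) ∧ (firstReturn f U)^[k] x ∈ A}

/-- Euclidean distance from a point of the sphere to a subset of `ℂ` (`∞` at `infty`). -/
def SphereModel.eDistToSet {𝕊 : Type} [MetricSpace 𝕊] [CompactSpace 𝕊]
    (S : SphereModel 𝕊) (y : 𝕊) (B : Set ℂ) : ℝ≥0∞ :=
  if y = S.infty then ⊤ else ENNReal.ofReal (Metric.infDist (S.toC y) B)

/-- Euclidean distance `dist (f z, a)` (junk value `1` at poles, where the true distance
is infinite; note `log (1/1) = 0 = log⁺ (1/∞)`). -/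
def SphereModel.fDist {𝕊 : Type} [MetricSpace 𝕊] [CompactSpace 𝕊] (S : SphereModel 𝕊)
    (f : 𝕊 → 𝕊) (a : ℂ) (z : ℂ) : ℝ :=
  if f (S.ι z) = S.infty then 1 else dist (S.toC (f (S.ι z))) a

/-- Euclidean distance `dist (f z, A)` to a set (junk value `1` at poles). -/
def SphereModel.fDistSet {𝕊 : Type} [MetricSpace 𝕊] [CompactSpace 𝕊] (S : SphereModel 𝕊)
    (f : 𝕊 → 𝕊) (A : Set ℂ) (z : ℂ) : ℝ :=
  if f (S.ι z) = S.infty then 1 else Metric.infDist (S.toC (f (S.ι z))) A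

/-- A subset of the sphere which is a bounded subset of `ℂ`. -/
def SphereModel.BoundedInC {𝕊 : Type} [MetricSpace 𝕊] [CompactSpace 𝕊]
    (S : SphereModel 𝕊) (U : Set 𝕊) : Prop :=
  ∃ B : Set ℂ, Bornology.IsBounded B ∧ U = S.ι '' B

end

/-!
Two holomorphic inverse branches of `f^{-n}` on a connected open set either coincide or have
disjoint images, because a common value determines the point where it is taken. Hence all branches
other than a fixed one omit a fixed ball, while the fixed one omits a ball on every small disc by
continuity. After rotating the centre of the disc to `0` and the omitted point to `∞`, the branch is
a bounded holomorphic function, so Cauchy's estimate bounds its derivative. By Landau's theorem a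
derivative of size at least `τ` forces the image to contain a ball of radius bounded below, and the
compact sphere has room for only finitely many disjoint such balls.
-/

lemma ednorm_comp_isometryEquiv {α : Type*} [MetricSpace α] (e e' : α ≃ᵢ α) (g : α → α) (x : α) :
    ednorm (e' ∘ g ∘ e) x = ednorm g (e x) := by
  have map_punctured : map e (𝓝[≠] x) = 𝓝[≠] (e x) := e.toHomeomorph.map_punctured_nhds_eq x
  simp only [ednorm, ← map_punctured, limsup, map_map, comp_def, e'.edist_eq, e.edist_eq]

lemma finite_of_exists_of_eq_of_dist_lt {X ι : Type*} [PseudoMetricSpace X] [CompactSpace X]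
    {P : ι → X → Prop} {ε : ℝ} (hε : 0 < ε)
    (hP : ∀ a b x y, P a x → P b y → dist x y < ε → a = b) : {a | ∃ x, P a x}.Finite := by
  obtain ⟨t, -, ht, cover⟩ := (isCompact_univ (X := X)).finite_cover_balls (half_pos hε)
  have fibre_finite (c : X) : {a | ∃ x ∈ ball c (ε / 2), P a x}.Finite := by
    refine Set.Subsingleton.finite ?_
    rintro a ⟨x, hx, hax⟩ b ⟨y, hy, hby⟩
    rw [mem_ball] at hx hy
    exact hP a b x y hax hby (by linarith [dist_triangle_right x y c])
  refine (ht.biUnion fun c _ ↦ fibre_finite c).subset ?_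
  rintro a ⟨x, hax⟩
  obtain ⟨c, hc, hxc⟩ := mem_iUnion₂.1 (cover (mem_univ x))
  exact mem_biUnion hc ⟨x, hxc, hax⟩

lemma eqOn_of_isPreconnected_of_image_mem_nhds {X Y : Type*} [TopologicalSpace X]
    [TopologicalSpace Y] [T2Space Y] {U : Set X} (hUo : IsOpen U) (hUc : IsPreconnected U)
    {g g' : X → Y} (hg : ContinuousOn g U) (hg' : ContinuousOn g' U)
    (hopen : ∀ x ∈ U, g '' U ∈ 𝓝 (g x))
    (hsep : ∀ x ∈ U, ∀ y ∈ U, g x = g' y → x = y)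
    {u : X} (hu : u ∈ U) (h : g u = g' u) : EqOn g g' U := by
  suffices hsub : U ⊆ {x | x ∈ U ∧ g x = g' x} from fun x hx ↦ (hsub hx).2
  refine hUc.subset_of_closure_inter_subset ?_ ⟨u, hu, hu, h⟩ ?_
  · refine isOpen_iff_mem_nhds.2 ?_
    rintro x ⟨hx, hxx⟩
    have hU : U ∈ 𝓝 x := hUo.mem_nhds hx
    filter_upwards [hU, (hg'.continuousAt hU) (hxx ▸ hopen x hx)] with y hy ⟨y', hy', hyy'⟩
    exact ⟨hy, hsep y' hy' y hy hyy' ▸ hyy'⟩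
  · rintro x ⟨hcl, hx⟩
    refine ⟨hx, tendsto_nhds_unique_of_frequently_eq (hg.continuousAt (hUo.mem_nhds hx))
      (hg'.continuousAt (hUo.mem_nhds hx)) ?_⟩
    exact (mem_closure_iff_frequently.1 hcl).mono fun y hy ↦ hy.2

section Disc

variable {G : ℂ → ℂ} {c : ℂ} {s m : ℝ}

lemma norm_dslope_sub_deriv_le (hG : DifferentiableOn ℂ G (ball c s))
    (hm : MapsTo G (ball c s) (closedBall (G c) m)) {v : ℂ} (hv : v ∈ ball c s) :
    ‖dslope G c v - deriv G c‖ ≤ 2 * m / s ^ 2 * ‖v - c‖ := by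
  have hc : c ∈ ball c s := mem_ball_self (pos_of_mem_ball hv)
  have hD : DifferentiableOn ℂ (dslope G c) (ball c s) :=
    (Complex.differentiableOn_dslope (isOpen_ball.mem_nhds hc)).2 hG
  have bound (u : ℂ) (hu : u ∈ ball c s) : ‖dslope G c u‖ ≤ m / s :=
    Complex.norm_dslope_le_div_of_mapsTo_ball hG hm hu
  have maps : MapsTo (dslope G c) (ball c s) (closedBall (dslope G c c) (2 * m / s)) :=
    fun u hu ↦ mem_closedBall_iff_norm.2 <| calc
      ‖dslope G c u - dslope G c c‖ ≤ ‖dslope G c u‖ + ‖dslope G c c‖ := norm_sub_le _ _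
      _ ≤ m / s + m / s := add_le_add (bound u hu) (bound c hc)
      _ = 2 * m / s := by ring
  have schwarz := Complex.dist_le_div_mul_dist_of_mapsTo_ball hD maps hv
  rwa [dslope_same, dist_eq_norm, dist_eq_norm, div_div, ← sq] at schwarz

/-- A form of Landau's theorem: on the circle of radius `|G'(c)| s² / (4m)` the slope
`(G v - G c) / (v - c)` still has modulus at least `|G'(c)| / 2`. -/
lemma ball_subset_image_ball_of_mapsTo (hs : 0 < s) (hG : DifferentiableOn ℂ G (ball c s))
    (hm : MapsTo G (ball c s) (closedBall (G c) m)) :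
    ball (G c) (‖deriv G c‖ ^ 2 * s ^ 2 / (16 * m)) ⊆ G '' ball c s := by
  intro y hy
  have radius_pos := pos_of_mem_ball hy
  have hm0 : 0 < m := by
    by_contra! hm0
    exact radius_pos.not_ge (div_nonpos_of_nonneg_of_nonpos (by positivity) (by linarith))
  have deriv_ne : deriv G c ≠ 0 := fun h ↦ by simp [h] at radius_pos
  set σ := ‖deriv G c‖ * s ^ 2 / (4 * m) with hσ
  have σ_pos : 0 < σ := by positivity
  have σ_lt : σ < s := by
    have cauchy : ‖deriv G c‖ ≤ m / s := Complex.norm_deriv_le_div_of_mapsTo_ball hG hm hs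
    rw [le_div_iff₀ hs] at cauchy
    rw [hσ, div_lt_iff₀ (by positivity)]
    nlinarith
  have slope_ge (v : ℂ) (hv : v ∈ sphere c σ) :
      σ * (‖deriv G c‖ / 2) ≤ ‖G v - G c‖ := by
    have hv' : ‖v - c‖ = σ := mem_sphere_iff_norm.1 hv
    have near := norm_dslope_sub_deriv_le hG hm (sphere_subset_ball σ_lt hv)
    have half : 2 * m / s ^ 2 * ‖v - c‖ = ‖deriv G c‖ / 2 := by
      rw [hv', hσ]; field_simp; ring
    rw [← sub_smul_dslope G c v, norm_smul, hv']
    gcongr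
    linarith [norm_sub_norm_le (deriv G c) (dslope G c v),
      norm_sub_rev (deriv G c) (dslope G c v)]
  have nonconst : ∃ᶠ v in 𝓝 c, G v ≠ G c := fun h ↦ deriv_ne <| by
    have : G =ᶠ[𝓝 c] fun _ ↦ G c := h.mono fun v hv ↦ not_not.1 hv
    rw [this.deriv_eq, deriv_const]
  have subset_ball : closedBall c σ ⊆ ball c s := closedBall_subset_ball σ_lt
  refine image_mono subset_ball <| DiffContOnCl.ball_subset_image_closedBall
    (hG.diffContOnCl_ball subset_ball) σ_pos slope_ge nonconst ?_
  convert hy using 2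
  rw [hσ]; ring

end Disc

namespace SphereModel

variable {𝕊 : Type} [MetricSpace 𝕊] [CompactSpace 𝕊] (S : SphereModel 𝕊)

lemma toC_ι (a : ℂ) : S.toC (S.ι a) = a :=
  leftInverse_invFun S.injective_ι a

lemma ι_ne_infty (a : ℂ) : S.ι a ≠ S.infty :=
  S.range_ι.subset (mem_range_self a)

lemma ι_toC {x : 𝕊} (hx : x ≠ S.infty) : S.ι (S.toC x) = x :=
  invFun_eq (S.range_ι.superset hx)

section Chart

lemma chart_chartInv (x : 𝕊) (a : ℂ) : S.chart x (S.chartInv x a) = a := by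
  by_cases hx : x = S.infty
  · simp only [chartInv, chart, if_pos hx, comp_apply, S.sphereInv_invol, toC_ι]
  · simp only [chartInv, chart, if_neg hx, toC_ι]

lemma eventually_chartInv_chart (x : 𝕊) : ∀ᶠ y in 𝓝 x, S.chartInv x (S.chart x y) = y := by
  by_cases hx : x = S.infty
  · filter_upwards [isOpen_ne.mem_nhds (hx ▸ (S.ι_ne_infty 0).symm)] with y hy
    have inv_ne : S.sphereInv y ≠ S.infty := fun h ↦
      hy (by rw [← S.sphereInv_invol y, h, S.sphereInv_infty])
    simp only [chartInv, chart, if_pos hx, comp_apply, S.ι_toC inv_ne, S.sphereInv_invol]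
  · filter_upwards [isOpen_ne.mem_nhds hx] with y hy
    simp only [chartInv, chart, if_neg hx, S.ι_toC hy]

lemma chartInv_chart_self (x : 𝕊) : S.chartInv x (S.chart x x) = x :=
  (S.eventually_chartInv_chart x).self_of_nhds

lemma continuous_chartInv (x : 𝕊) : Continuous (S.chartInv x) := by
  unfold chartInv
  split_ifs
  · exact S.continuous_sphereInv.comp S.continuous_ι
  · exact S.continuous_ι

lemma tendsto_chartInv (x : 𝕊) : Tendsto (S.chartInv x) (𝓝 (S.chart x x)) (𝓝 x) := by
  simpa only [chartInv_chart_self] using (S.continuous_chartInv x).tendsto (S.chart x x)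

lemma nhds_le_map_chartInv (x : 𝕊) : 𝓝 x ≤ map (S.chartInv x) (𝓝 (S.chart x x)) := by
  have isOpenMap_sphereInv : IsOpenMap S.sphereInv :=
    (Homeomorph.mk ⟨S.sphereInv, S.sphereInv, S.sphereInv_invol, S.sphereInv_invol⟩
      S.continuous_sphereInv S.continuous_sphereInv).isOpenMap
  have isOpenMap_chartInv : IsOpenMap (S.chartInv x) := by
    unfold chartInv
    split_ifs
    · exact isOpenMap_sphereInv.comp S.isOpenMap_ι
    · exact S.isOpenMap_ι
  simpa only [chartInv_chart_self] using isOpenMap_chartInv.nhds_le (S.chart x x)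

variable {S} {f g : 𝕊 → 𝕊} {x : 𝕊}

lemma HolAt.eventually_chartInv_chart (hg : S.HolAt g x) : ∀ᶠ u in 𝓝 (S.chart x x),
    S.chartInv (g x) (S.chart (g x) (g (S.chartInv x u))) = g (S.chartInv x u) :=
  (hg.1.tendsto.comp (S.tendsto_chartInv x)).eventually (S.eventually_chartInv_chart (g x))

lemma HolAt.comp (hf : S.HolAt f (g x)) (hg : S.HolAt g x) : S.HolAt (f ∘ g) x := by
  refine ⟨hf.1.comp hg.1, ?_⟩
  have base : (S.chart (g x) ∘ g ∘ S.chartInv x) (S.chart x x) = S.chart (g x) (g x) := by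
    simp only [comp_apply, chartInv_chart_self]
  refine (AnalyticAt.comp (base.symm ▸ hf.2) hg.2).congr ?_
  filter_upwards [hg.eventually_chartInv_chart] with u hu
  simp only [comp_apply, hu]

lemma HolAt.nhds_le_map_of_injOn (hg : S.HolAt g x) {B : Set 𝕊} (hB : B ∈ 𝓝 x)
    (hinj : InjOn g B) : 𝓝 (g x) ≤ map g (𝓝 x) := by
  set G := S.chart (g x) ∘ g ∘ S.chartInv x
  have eventually_G : ∀ᶠ u in 𝓝 (S.chart x x), S.chartInv (g x) (G u) = g (S.chartInv x u) :=
    hg.eventually_chartInv_chart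
  have G_self : G (S.chart x x) = S.chart (g x) (g x) := by
    simp only [G, comp_apply, chartInv_chart_self]
  have not_const : ¬ ∀ᶠ u in 𝓝 (S.chart x x), G u = G (S.chart x x) := by
    intro const
    have singleton_mem_nhds : {S.chart x x} ∈ 𝓝 (S.chart x x) := by
      filter_upwards [const, eventually_G, S.tendsto_chartInv x hB] with u hu hgu huB
      have : g (S.chartInv x u) = g x := by rw [← hgu, hu, G_self, chartInv_chart_self]
      rw [mem_singleton_iff, ← S.chart_chartInv x u, hinj huB (mem_of_mem_nhds hB) this]
    simp only [← mem_interior_iff_mem_nhds, interior_singleton,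
      mem_empty_iff_false] at singleton_mem_nhds
  have open_G : 𝓝 (S.chart (g x) (g x)) ≤ map G (𝓝 (S.chart x x)) :=
    G_self ▸ hg.2.eventually_constant_or_nhds_le_map_nhds.resolve_left not_const
  calc 𝓝 (g x) ≤ map (S.chartInv (g x)) (𝓝 (S.chart (g x) (g x))) := S.nhds_le_map_chartInv (g x)
    _ ≤ map (S.chartInv (g x)) (map G (𝓝 (S.chart x x))) := map_mono open_G
    _ = map g (map (S.chartInv x) (𝓝 (S.chart x x))) := by
      rw [map_map, map_map]
      exact map_congr eventually_G
    _ ≤ map g (𝓝 x) := map_mono (S.tendsto_chartInv x)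

end Chart

section Homogeneous

open scoped Classical in
/-- The point of the sphere with homogeneous coordinates `[x : y]`, so that `ι a = [a : 1]` and
`infty = [1 : 0]`. The value at `(0, 0)` is the junk value `infty`. -/
noncomputable def ofHomog (x y : ℂ) : 𝕊 := if y = 0 then S.infty else S.ι (x / y)

lemma ofHomog_zero_right (x : ℂ) : S.ofHomog x 0 = S.infty := if_pos rfl

lemma ofHomog_of_ne {y : ℂ} (hy : y ≠ 0) (x : ℂ) : S.ofHomog x y = S.ι (x / y) := if_neg hy

lemma ofHomog_one_right (x : ℂ) : S.ofHomog x 1 = S.ι x := by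
  rw [S.ofHomog_of_ne one_ne_zero, div_one]

lemma ofHomog_mul_left {c : ℂ} (hc : c ≠ 0) (x y : ℂ) :
    S.ofHomog (c * x) (c * y) = S.ofHomog x y := by
  simp only [ofHomog, mul_eq_zero, hc, false_or, mul_div_mul_left _ _ hc]

lemma sphereInv_ofHomog {x y : ℂ} (h : ‖x‖ ^ 2 + ‖y‖ ^ 2 ≠ 0) :
    S.sphereInv (S.ofHomog x y) = S.ofHomog y x := by
  by_cases hy : y = 0
  · have hx : x ≠ 0 := by simpa [hy] using h
    rw [hy, ofHomog_zero_right, S.ofHomog_of_ne hx, zero_div, sphereInv_infty]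
  by_cases hx : x = 0
  · rw [hx, ofHomog_zero_right, S.ofHomog_of_ne hy, zero_div, sphereInv_zero]
  · rw [S.ofHomog_of_ne hx, S.ofHomog_of_ne hy, S.sphereInv_ι _ (div_ne_zero hx hy), inv_div]

lemma exists_ofHomog_eq (x : 𝕊) : ∃ p q : ℂ, star p * p + star q * q = 1 ∧ S.ofHomog p q = x := by
  by_cases hx : x = S.infty
  · exact ⟨1, 0, by simp, by rw [ofHomog_zero_right, hx]⟩
  obtain ⟨a, rfl⟩ := S.range_ι.superset hx
  set t : ℝ := √(1 + ‖a‖ ^ 2)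
  have t_ne : (t : ℂ) ≠ 0 := Complex.ofReal_ne_zero.2 (by positivity)
  have star_t : star (t : ℂ) = t := Complex.conj_ofReal t
  have t_sq : (t : ℂ) ^ 2 = 1 + star a * a := by
    rw [Complex.star_def, Complex.conj_mul', ← Complex.ofReal_pow, Real.sq_sqrt (by positivity)]
    push_cast
    rfl
  refine ⟨a / t, 1 / t, ?_, ?_⟩
  · rw [star_div₀, star_div₀, star_t, star_one]
    field_simp
    linear_combination -t_sq
  · rw [S.ofHomog_of_ne (one_div_ne_zero t_ne), div_div_div_cancel_right₀ t_ne, div_one]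

lemma sqrt_one_add_norm_div_sq {x y : ℂ} (hy : y ≠ 0) :
    √(1 + ‖x / y‖ ^ 2) = √(‖x‖ ^ 2 + ‖y‖ ^ 2) / ‖y‖ := by
  have hy' : 0 < ‖y‖ := norm_pos_iff.2 hy
  rw [norm_div, div_pow, one_add_div (by positivity), Real.sqrt_div (by positivity),
    Real.sqrt_sq hy'.le, add_comm]

lemma dist_ofHomog_infty {x y : ℂ} (hy : y ≠ 0) :
    dist (S.ofHomog x y) S.infty = 2 * ‖y‖ / √(‖x‖ ^ 2 + ‖y‖ ^ 2) := by
  rw [S.ofHomog_of_ne hy, S.dist_infty, sqrt_one_add_norm_div_sq hy, div_div_eq_mul_div]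

lemma dist_ofHomog {x y x' y' : ℂ} (h : ‖x‖ ^ 2 + ‖y‖ ^ 2 ≠ 0) (h' : ‖x'‖ ^ 2 + ‖y'‖ ^ 2 ≠ 0) :
    dist (S.ofHomog x y) (S.ofHomog x' y') =
      2 * ‖x * y' - x' * y‖ / (√(‖x‖ ^ 2 + ‖y‖ ^ 2) * √(‖x'‖ ^ 2 + ‖y'‖ ^ 2)) := by
  wlog hy : y ≠ 0 generalizing x y x' y'
  · obtain rfl : y = 0 := not_not.1 hy
    by_cases hy' : y' = 0
    · simp [hy', ofHomog_zero_right]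
    · rw [dist_comm, this h' h hy', norm_sub_rev, mul_comm (√_)]
  by_cases hy' : y' = 0
  · have hx' : 0 < ‖x'‖ := norm_pos_iff.2 (by simpa [hy'] using h')
    rw [hy', ofHomog_zero_right, S.dist_ofHomog_infty hy]
    simp only [mul_zero, zero_sub, norm_neg, norm_mul, norm_zero, ne_eq, OfNat.ofNat_ne_zero,
      not_false_eq_true, zero_pow, add_zero, Real.sqrt_sq hx'.le]
    field_simp
  · rw [S.ofHomog_of_ne hy, S.ofHomog_of_ne hy', S.dist_ι, sqrt_one_add_norm_div_sq hy,
      sqrt_one_add_norm_div_sq hy', dist_eq_norm, div_sub_div _ _ hy hy', norm_div, norm_mul y,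
      mul_comm y x']
    field_simp

lemma analyticAt_chart_ofHomog {X Y : ℂ → ℂ} {u : ℂ} (hX : AnalyticAt ℂ X u)
    (hY : AnalyticAt ℂ Y u) (h : ‖X u‖ ^ 2 + ‖Y u‖ ^ 2 ≠ 0) :
    AnalyticAt ℂ (fun v ↦ S.chart (S.ofHomog (X u) (Y u)) (S.ofHomog (X v) (Y v))) u := by
  by_cases hYu : Y u = 0
  · have hXu : X u ≠ 0 := by simpa [hYu] using h
    refine (hY.div hX hXu).congr ?_
    filter_upwards [hX.continuousAt.eventually_ne hXu] with v hv
    have hv' : ‖X v‖ ^ 2 + ‖Y v‖ ^ 2 ≠ 0 := by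
      have := norm_pos_iff.2 hv
      positivity
    rw [hYu, ofHomog_zero_right, chart, if_pos rfl, comp_apply, S.sphereInv_ofHomog hv',
      S.ofHomog_of_ne hv, toC_ι, Pi.div_apply]
  · refine (hX.div hY hYu).congr ?_
    filter_upwards [hY.continuousAt.eventually_ne hYu] with v hv
    rw [S.ofHomog_of_ne hYu, chart, if_neg (S.ι_ne_infty _), S.ofHomog_of_ne hv, toC_ι,
      Pi.div_apply]

lemma exists_chartInv_eq_ofHomog (x : 𝕊) : ∃ X Y : ℂ → ℂ, Differentiable ℂ X ∧ Differentiable ℂ Y ∧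
    ∀ v, ‖X v‖ ^ 2 + ‖Y v‖ ^ 2 ≠ 0 ∧ S.chartInv x v = S.ofHomog (X v) (Y v) := by
  have norm_ne (v : ℂ) : ‖v‖ ^ 2 + ‖(1 : ℂ)‖ ^ 2 ≠ 0 := by
    rw [norm_one]
    positivity
  by_cases hx : x = S.infty
  · refine ⟨fun _ ↦ 1, id, by fun_prop, by fun_prop, fun v ↦ ⟨?_, ?_⟩⟩
    · rw [add_comm]
      exact norm_ne v
    · rw [chartInv, if_pos hx, comp_apply, ← ofHomog_one_right, 
        S.sphereInv_ofHomog (norm_ne v), id]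
  · refine ⟨id, fun _ ↦ 1, by fun_prop, by fun_prop, fun v ↦ ⟨norm_ne v, ?_⟩⟩
    rw [chartInv, if_neg hx, ofHomog_one_right, id]

end Homogeneous

section Rotation

open scoped Classical in
/-- The action of the matrix `!![a, b; -conj b, conj a]` on the sphere. It is a rotation when
`|a|² + |b|² = 1`. -/
noncomputable def rotation (a b : ℂ) (x : 𝕊) : 𝕊 :=
  if x = S.infty then S.ofHomog a (-star b)
  else S.ofHomog (a * S.toC x + b) (-star b * S.toC x + star a)

lemma rotation_ofHomog (a b : ℂ) {x y : ℂ} (h : ‖x‖ ^ 2 + ‖y‖ ^ 2 ≠ 0) :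
    S.rotation a b (S.ofHomog x y) = S.ofHomog (a * x + b * y) (-star b * x + star a * y) := by
  by_cases hy : y = 0
  · have hx : x ≠ 0 := by simpa [hy] using h
    rw [hy, ofHomog_zero_right, rotation, if_pos rfl, ← S.ofHomog_mul_left hx]
    congr 1 <;> ring
  · rw [S.ofHomog_of_ne hy, rotation, if_neg (S.ι_ne_infty _), toC_ι, ← S.ofHomog_mul_left hy]
    congr 1 <;> field_simp

variable {a b : ℂ}

lemma norm_sq_add_norm_sq_eq_one (h : star a * a + star b * b = 1) : ‖a‖ ^ 2 + ‖b‖ ^ 2 = 1 := by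
  rw [Complex.star_def, Complex.conj_mul', Complex.conj_mul'] at h
  exact_mod_cast h

lemma norm_sq_rotation (h : star a * a + star b * b = 1) (x y : ℂ) :
    ‖a * x + b * y‖ ^ 2 + ‖-star b * x + star a * y‖ ^ 2 = ‖x‖ ^ 2 + ‖y‖ ^ 2 := by
  rw [← Complex.ofReal_inj]
  push_cast
  simp only [← Complex.conj_mul', ← Complex.star_def, star_add, star_mul, star_neg, star_star]
  linear_combination (star x * x + star y * y) * h

lemma rotation_rotation (h : star a * a + star b * b = 1) (x : 𝕊) :
    S.rotation (star a) (-b) (S.rotation a b x) = x := by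
  obtain ⟨p, q, hpq, rfl⟩ := S.exists_ofHomog_eq x
  have hpq' := (norm_sq_add_norm_sq_eq_one hpq).trans_ne one_ne_zero
  rw [S.rotation_ofHomog a b hpq', S.rotation_ofHomog _ _ (norm_sq_rotation h p q ▸ hpq')]
  simp only [star_neg, star_star]
  congr 1
  · linear_combination p * h
  · linear_combination q * h

lemma isometry_rotation (h : star a * a + star b * b = 1) : Isometry (S.rotation a b) := by
  refine Isometry.of_dist_eq fun x y ↦ ?_
  obtain ⟨p, q, hpq, rfl⟩ := S.exists_ofHomog_eq x
  obtain ⟨p', q', hpq', rfl⟩ := S.exists_ofHomog_eq y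
  have hx := (norm_sq_add_norm_sq_eq_one hpq).trans_ne one_ne_zero
  have hy := (norm_sq_add_norm_sq_eq_one hpq').trans_ne one_ne_zero
  have det : (a * p + b * q) * (-star b * p' + star a * q') -
      (a * p' + b * q') * (-star b * p + star a * q) = p * q' - p' * q := by
    linear_combination (p * q' - p' * q) * h
  rw [S.rotation_ofHomog a b hx, S.rotation_ofHomog a b hy,
    S.dist_ofHomog (norm_sq_rotation h p q ▸ hx) (norm_sq_rotation h p' q' ▸ hy),
    S.dist_ofHomog hx hy, det, norm_sq_rotation h, norm_sq_rotation h]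

lemma holAt_rotation (h : star a * a + star b * b = 1) (x : 𝕊) : S.HolAt (S.rotation a b) x := by
  refine ⟨(S.isometry_rotation h).continuous.continuousAt, ?_⟩
  obtain ⟨X, Y, hX, hY, hXY⟩ := S.exists_chartInv_eq_ofHomog x
  have rotation_chartInv (v : ℂ) : S.rotation a b (S.chartInv x v) =
      S.ofHomog (a * X v + b * Y v) (-star b * X v + star a * Y v) := by
    rw [(hXY v).2, S.rotation_ofHomog a b (hXY v).1]
  have rotation_self := rotation_chartInv (S.chart x x)
  rw [S.chartInv_chart_self] at rotation_self
  simp only [comp_def, rotation_chartInv, rotation_self]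
  have hX' := hX.analyticAt (S.chart x x)
  have hY' := hY.analyticAt (S.chart x x)
  refine S.analyticAt_chart_ofHomog (X := fun v ↦ a * X v + b * Y v)
    (Y := fun v ↦ -star b * X v + star a * Y v) (by fun_prop) (by fun_prop) ?_
  exact (norm_sq_rotation h _ _).trans_ne (hXY _).1

lemma exists_isometryEquiv_holAt_apply_eq (x y : 𝕊) :
    ∃ e : 𝕊 ≃ᵢ 𝕊, (∀ w, S.HolAt e w) ∧ e x = y := by
  obtain ⟨p, q, hpq, rfl⟩ := S.exists_ofHomog_eq x
  obtain ⟨p', q', hpq', rfl⟩ := S.exists_ofHomog_eq y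
  -- The first row of the product of the special unitary matrices taking `(p, q)` to `(1, 0)` and
  -- `(1, 0)` to the coordinates of the target.
  set a := p' * star p + q * star q' with ha
  set b := p' * star q - p * star q' with hb
  have hab : star a * a + star b * b = 1 := by
    simp only [ha, hb, star_add, star_sub, star_mul, star_star]
    linear_combination (star p * p + star q * q) * hpq' + hpq
  have hab' : star (star a) * star a + star (-b) * -b = 1 := by
    rw [star_star, star_neg]
    linear_combination hab
  have rotation_rotation' (w : 𝕊) :
      S.rotation a b (S.rotation (star a) (-b) w) = w := by
    simpa only [star_star, neg_neg] using S.rotation_rotation hab' w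
  refine ⟨.mk' (S.rotation a b) (S.rotation (star a) (-b)) rotation_rotation'
    (S.isometry_rotation hab), S.holAt_rotation hab, ?_⟩
  change S.rotation a b _ = _
  rw [S.rotation_ofHomog a b ((norm_sq_add_norm_sq_eq_one hpq).trans_ne one_ne_zero)]
  simp only [ha, hb, star_add, star_sub, star_mul, star_star]
  congr 1
  · linear_combination p' * hpq
  · linear_combination q' * hpq

end Rotation

section Affine

lemma one_le_sqrt_one_add_norm_sq (a : ℂ) : 1 ≤ √(1 + ‖a‖ ^ 2) :=
  Real.one_le_sqrt.2 (le_add_of_nonneg_right (sq_nonneg _))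

lemma norm_le_sqrt_one_add_norm_sq (a : ℂ) : ‖a‖ ≤ √(1 + ‖a‖ ^ 2) :=
  Real.le_sqrt_of_sq_le (le_add_of_nonneg_left zero_le_one)

lemma dist_ι_le (u v : ℂ) : dist (S.ι u) (S.ι v) ≤ 2 * dist u v := by
  rw [S.dist_ι]
  exact div_le_self (by positivity) (one_le_mul_of_one_le_of_one_le
    (one_le_sqrt_one_add_norm_sq u) (one_le_sqrt_one_add_norm_sq v))

lemma mapsTo_ι_ball (c : ℂ) (ρ : ℝ) : MapsTo S.ι (ball c (ρ / 2)) (ball (S.ι c) ρ) :=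
  fun u hu ↦ (S.dist_ι_le u c).trans_lt (by linarith [mem_ball.1 hu])

lemma dist_eq_two_mul_dist_ι_div (u v : ℂ) :
    dist u v = 2 * dist (S.ι u) (S.ι v) / (dist (S.ι u) S.infty * dist (S.ι v) S.infty) := by
  rw [S.dist_ι, S.dist_infty, S.dist_infty]
  field_simp

lemma norm_le_of_le_dist_infty {u : ℂ} {δ : ℝ} (hδ : 0 < δ) (hu : δ ≤ dist (S.ι u) S.infty) :
    ‖u‖ ≤ 2 / δ := by
  have hu₀ : 0 < √(1 + ‖u‖ ^ 2) := by positivity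
  rw [S.dist_infty, le_div_comm₀ hδ hu₀] at hu
  exact (norm_le_sqrt_one_add_norm_sq u).trans hu

lemma map_ι_punctured_nhds (a : ℂ) : map S.ι (𝓝[≠] a) = 𝓝[≠] (S.ι a) := by
  have := (IsOpenEmbedding.of_continuous_injective_isOpenMap S.continuous_ι S.injective_ι
    S.isOpenMap_ι).map_nhdsWithin_preimage_eq {S.ι a}ᶜ a
  rwa [preimage_compl, ← image_singleton, S.injective_ι.preimage_image, image_singleton] at this

/-- The expression of a self-map of the sphere in the affine coordinate `ι`, with junk value where
the map takes the value `infty`. -/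
noncomputable def coord (g : 𝕊 → 𝕊) : ℂ → ℂ := S.toC ∘ g ∘ S.ι

variable {S} {g : 𝕊 → 𝕊} {a : ℂ}

lemma ι_coord (ha : g (S.ι a) ≠ S.infty) : S.ι (S.coord g a) = g (S.ι a) := S.ι_toC ha

lemma HolAt.analyticAt_coord (hg : S.HolAt g (S.ι a)) (ha : g (S.ι a) ≠ S.infty) :
    AnalyticAt ℂ (S.coord g) a := by
  simpa only [coord, chart, chartInv, if_neg ha, if_neg (S.ι_ne_infty a), toC_ι] using hg.2

lemma HolAt.ednorm_ι (hg : S.HolAt g (S.ι a)) (ha : g (S.ι a) ≠ S.infty) :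
    ednorm g (S.ι a) = ENNReal.ofReal
      (‖deriv (S.coord g) a‖ * (1 + ‖a‖ ^ 2) / (1 + ‖S.coord g a‖ ^ 2)) := by
  set G := S.coord g
  have ι_G {v : ℂ} (hv : g (S.ι v) ≠ S.infty) : S.ι (G v) = g (S.ι v) := ι_coord hv
  have hG : HasDerivAt G (deriv G a) a := (hg.analyticAt_coord ha).differentiableAt.hasDerivAt
  have ne_infty : ∀ᶠ v in 𝓝 a, g (S.ι v) ≠ S.infty :=
    (hg.1.comp S.continuous_ι.continuousAt).eventually_ne ha
  have quotient_eq : ∀ᶠ v in 𝓝[≠] a, ENNReal.ofReal (‖slope G a v‖ *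
      (√(1 + ‖a‖ ^ 2) * √(1 + ‖v‖ ^ 2)) / (√(1 + ‖G a‖ ^ 2) * √(1 + ‖G v‖ ^ 2))) =
      edist (g (S.ι v)) (g (S.ι a)) / edist (S.ι v) (S.ι a) := by
    filter_upwards [nhdsWithin_le_nhds ne_infty, self_mem_nhdsWithin] with v hv hva
    have dist_va_pos : 0 < dist v a := dist_pos.2 hva
    have dist_ι_pos : 0 < dist (S.ι v) (S.ι a) := dist_pos.2 (S.injective_ι.ne hva)
    rw [← ι_G hv, ← ι_G ha, edist_dist, edist_dist, ← ENNReal.ofReal_div_of_pos dist_ι_pos,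
      S.dist_ι, S.dist_ι, slope_def_field, norm_div, ← dist_eq_norm, ← dist_eq_norm]
    congr 1
    field_simp
  have limit : Tendsto (fun v ↦ ‖slope G a v‖ * (√(1 + ‖a‖ ^ 2) * √(1 + ‖v‖ ^ 2)) /
      (√(1 + ‖G a‖ ^ 2) * √(1 + ‖G v‖ ^ 2))) (𝓝[≠] a)
      (𝓝 (‖deriv G a‖ * (√(1 + ‖a‖ ^ 2) * √(1 + ‖a‖ ^ 2)) /
        (√(1 + ‖G a‖ ^ 2) * √(1 + ‖G a‖ ^ 2)))) := by
    have slope_lim := hasDerivAt_iff_tendsto_slope.1 hG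
    have G_lim : Tendsto G (𝓝[≠] a) (𝓝 (G a)) := hG.continuousAt.continuousWithinAt
    have id_lim : Tendsto id (𝓝[≠] a) (𝓝 a) := nhdsWithin_le_nhds
    have sqrt_lim {h : ℂ → ℂ} {b : ℂ} (hh : Tendsto h (𝓝[≠] a) (𝓝 b)) :
        Tendsto (fun v ↦ √(1 + ‖h v‖ ^ 2)) (𝓝[≠] a) (𝓝 √(1 + ‖b‖ ^ 2)) :=
      ((hh.norm.pow 2).const_add 1).sqrt
    exact (slope_lim.norm.mul ((sqrt_lim id_lim).const_mul _)).div ((sqrt_lim G_lim).const_mul _)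
      (by positivity)
  rw [Real.mul_self_sqrt (by positivity), Real.mul_self_sqrt (by positivity)] at limit
  rw [ednorm, ← S.map_ι_punctured_nhds, limsup, map_map]
  exact ((ENNReal.tendsto_ofReal limit).congr' quotient_eq).limsup_eq

end Affine

section Ball

lemma denseRange_ι : DenseRange S.ι := by
  intro x
  by_cases hx : x = S.infty
  · have zero_mem : (0 : ℂ) ∈ closure {0}ᶜ := by simp
    have maps : MapsTo (S.sphereInv ∘ S.ι) {0}ᶜ (range S.ι) := fun v hv ↦
      ⟨v⁻¹, (S.sphereInv_ι v hv).symm⟩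
    have := map_mem_closure (S.continuous_sphereInv.comp S.continuous_ι) zero_mem maps
    rwa [comp_apply, S.sphereInv_zero, ← hx] at this
  · exact subset_closure (S.range_ι.superset hx)

lemma starConvex_preimage_ball (R : ℝ) : StarConvex ℝ 0 (S.ι ⁻¹' ball (S.ι 0) R) := by
  refine starConvex_zero_iff.2 fun u hu t ht₀ ht₁ ↦ mem_ball.2 (lt_of_le_of_lt ?_ hu)
  have scale : t * √(1 + ‖u‖ ^ 2) ≤ √(1 + ‖t • u‖ ^ 2) := by
    refine Real.le_sqrt_of_sq_le ?_
    rw [mul_pow, Real.sq_sqrt (by positivity), norm_smul, Real.norm_of_nonneg ht₀]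
    nlinarith
  simp only [S.dist_ι, dist_zero_right, norm_zero, ne_eq, OfNat.ofNat_ne_zero, not_false_eq_true,
    zero_pow, add_zero, Real.sqrt_one, mul_one]
  rw [div_le_div_iff₀ (by positivity) (by positivity)]
  calc 2 * ‖t • u‖ * √(1 + ‖u‖ ^ 2) = 2 * ‖u‖ * (t * √(1 + ‖u‖ ^ 2)) := by
        rw [norm_smul, Real.norm_of_nonneg ht₀]
        ring
    _ ≤ 2 * ‖u‖ * √(1 + ‖t • u‖ ^ 2) := by gcongr

include S in
lemma isPreconnected_ball (z : 𝕊) (R : ℝ) : IsPreconnected (ball z R) := by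
  obtain ⟨e, -, rfl⟩ := S.exists_isometryEquiv_holAt_apply_eq (S.ι 0) z
  rw [← e.image_ball]
  refine IsPreconnected.image ?_ _ e.continuous.continuousOn
  rcases le_or_gt R 0 with hR | hR
  · rw [ball_eq_empty.2 hR]
    exact isPreconnected_empty
  have preconnected : IsPreconnected (ball (S.ι 0) R ∩ range S.ι) := by
    rw [← image_preimage_eq_inter_range]
    exact ((S.starConvex_preimage_ball R).isPathConnected
      (mem_ball_self hR)).isConnected.isPreconnected.image _ S.continuous_ι.continuousOn
  exact preconnected.subset_closure inter_subset_left
    (S.denseRange_ι.open_subset_closure_inter isOpen_ball)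

include S in
lemma exists_dist_eq_two (x : 𝕊) : ∃ y, dist x y = 2 := by
  obtain ⟨e, -, rfl⟩ := S.exists_isometryEquiv_holAt_apply_eq (S.ι 0) x
  exact ⟨e S.infty, by simp [e.dist_eq, S.dist_infty]⟩

include S in
lemma exists_forall_mem_ball_one_le_dist {K : Set 𝕊} (hK : IsCompact K) {g : 𝕊 → 𝕊}
    (hg : ∀ w ∈ K, ContinuousAt g w) :
    ∃ ρ > 0, ∀ w ∈ K, ∃ x₀, ∀ x ∈ ball w ρ, 1 ≤ dist (g x) x₀ := by
  have := hK.uniformContinuousAt_of_continuousAt g hg (dist_mem_uniformity one_pos)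
  obtain ⟨ρ, hρ, small⟩ := Metric.mem_uniformity_dist.1 this
  refine ⟨ρ, hρ, fun w hw ↦ ?_⟩
  obtain ⟨x₀, hx₀⟩ := S.exists_dist_eq_two (g w)
  refine ⟨x₀, fun x hx ↦ ?_⟩
  have near : dist (g w) (g x) < 1 := small (mem_ball'.1 hx) hw
  linarith [dist_triangle (g w) (g x) x₀]

end Ball

/-- The map `g` is holomorphic on the ball of radius `ρ` about `w` and stays there at distance at
least `δ` from the point `x₀`. Normalising `w = ι 0` and `x₀ = infty` by rotations turns such a map
into a bounded holomorphic function on a disc. -/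
def HolOmits (g : 𝕊 → 𝕊) (w : 𝕊) (ρ : ℝ) (x₀ : 𝕊) (δ : ℝ) : Prop :=
  ∀ x ∈ ball w ρ, S.HolAt g x ∧ δ ≤ dist (g x) x₀

namespace HolOmits

variable {S} {g : 𝕊 → 𝕊} {w x₀ : 𝕊} {ρ δ τ : ℝ}

lemma exists_isometryEquiv (hg : S.HolOmits g w ρ x₀ δ) : ∃ e e' : 𝕊 ≃ᵢ 𝕊,
    e (S.ι 0) = w ∧ S.HolOmits (e' ∘ g ∘ e) (S.ι 0) ρ S.infty δ := by
  obtain ⟨e, he, rfl⟩ := S.exists_isometryEquiv_holAt_apply_eq (S.ι 0) w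
  obtain ⟨e', he', hx₀⟩ := S.exists_isometryEquiv_holAt_apply_eq x₀ S.infty
  refine ⟨e, e', rfl, fun x hx ↦ ?_⟩
  obtain ⟨hol, omits⟩ := hg (e x) (by rwa [mem_ball, e.dist_eq])
  exact ⟨(he' _).comp (hol.comp (he x)), by rwa [← hx₀, comp_apply, e'.dist_eq]⟩

lemma ne_infty (hg : S.HolOmits g (S.ι 0) ρ S.infty δ) (hδ : 0 < δ) {u : ℂ}
    (hu : u ∈ ball 0 (ρ / 2)) : g (S.ι u) ≠ S.infty :=
  dist_pos.1 (hδ.trans_le (hg _ (S.mapsTo_ι_ball 0 ρ hu)).2)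

lemma differentiableOn_coord (hg : S.HolOmits g (S.ι 0) ρ S.infty δ) (hδ : 0 < δ) :
    DifferentiableOn ℂ (S.coord g) (ball 0 (ρ / 2)) := fun _ hu ↦
  ((hg _ (S.mapsTo_ι_ball 0 ρ hu)).1.analyticAt_coord
    (hg.ne_infty hδ hu)).differentiableAt.differentiableWithinAt

lemma mapsTo_coord (hg : S.HolOmits g (S.ι 0) ρ S.infty δ) (hδ : 0 < δ) :
    MapsTo (S.coord g) (ball 0 (ρ / 2)) (closedBall (S.coord g 0) (4 / δ)) := by
  have bound {u : ℂ} (hu : u ∈ ball 0 (ρ / 2)) : ‖S.coord g u‖ ≤ 2 / δ := by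
    refine S.norm_le_of_le_dist_infty hδ ?_
    rw [ι_coord (hg.ne_infty hδ hu)]
    exact (hg _ (S.mapsTo_ι_ball 0 ρ hu)).2
  refine fun u hu ↦ mem_closedBall_iff_norm.2 ?_
  calc ‖S.coord g u - S.coord g 0‖ ≤ ‖S.coord g u‖ + ‖S.coord g 0‖ := norm_sub_le _ _
    _ ≤ 2 / δ + 2 / δ := add_le_add (bound hu) (bound (mem_ball_self (pos_of_mem_ball hu)))
    _ = 4 / δ := by ring

lemma ednorm_ι_zero_le (hg : S.HolOmits g (S.ι 0) ρ S.infty δ) (hρ : 0 < ρ) (hδ : 0 < δ) :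
    ednorm g (S.ι 0) ≤ ENNReal.ofReal ‖deriv (S.coord g) 0‖ := by
  rw [(hg _ (mem_ball_self hρ)).1.ednorm_ι (hg.ne_infty hδ (mem_ball_self (half_pos hρ)))]
  refine ENNReal.ofReal_le_ofReal ?_
  rw [norm_zero, zero_pow two_ne_zero, add_zero, mul_one]
  exact div_le_self (norm_nonneg _) (le_add_of_nonneg_right (sq_nonneg _))

lemma ednorm_le (hg : S.HolOmits g w ρ x₀ δ) (hρ : 0 < ρ) (hδ : 0 < δ) :
    ednorm g w ≤ ENNReal.ofReal (8 / (δ * ρ)) := by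
  obtain ⟨e, e', rfl, hg'⟩ := hg.exists_isometryEquiv
  rw [← ednorm_comp_isometryEquiv e e']
  refine (hg'.ednorm_ι_zero_le hρ hδ).trans (ENNReal.ofReal_le_ofReal ?_)
  calc _ ≤ 4 / δ / (ρ / 2) := Complex.norm_deriv_le_div_of_mapsTo_ball
        (hg'.differentiableOn_coord hδ) (hg'.mapsTo_coord hδ) (half_pos hρ)
    _ = 8 / (δ * ρ) := by field_simp; ring

lemma ball_subset_image_coord (hg : S.HolOmits g (S.ι 0) ρ S.infty δ) (hρ : 0 < ρ) (hδ : 0 < δ)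
    (hτ : 0 < τ) (h : ENNReal.ofReal τ ≤ ednorm g (S.ι 0)) :
    ball (S.coord g 0) (τ ^ 2 * ρ ^ 2 * δ / 256) ⊆ S.coord g '' ball 0 (ρ / 2) := by
  have le_deriv : τ ≤ ‖deriv (S.coord g) 0‖ :=
    (ENNReal.ofReal_le_ofReal_iff (norm_nonneg _)).1 (h.trans (hg.ednorm_ι_zero_le hρ hδ))
  refine (ball_subset_ball ?_).trans (ball_subset_image_ball_of_mapsTo (half_pos hρ)
    (hg.differentiableOn_coord hδ) (hg.mapsTo_coord hδ))
  calc τ ^ 2 * ρ ^ 2 * δ / 256 = τ ^ 2 * (ρ / 2) ^ 2 / (16 * (4 / δ)) := by field_simp; ring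
    _ ≤ ‖deriv (S.coord g) 0‖ ^ 2 * (ρ / 2) ^ 2 / (16 * (4 / δ)) := by gcongr

lemma ball_subset_image_of_infty (hg : S.HolOmits g (S.ι 0) ρ S.infty δ) (hρ : 0 < ρ)
    (hδ : 0 < δ) (hτ : 0 < τ) (h : ENNReal.ofReal τ ≤ ednorm g (S.ι 0)) :
    ball (g (S.ι 0)) (min (δ / 2) (τ ^ 2 * ρ ^ 2 * δ ^ 3 / 1024)) ⊆ g '' ball (S.ι 0) ρ := by
  intro y hy
  obtain ⟨near, nearer⟩ := lt_min_iff.1 (mem_ball.1 hy)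
  have center_far : δ ≤ dist (g (S.ι 0)) S.infty := (hg _ (mem_ball_self hρ)).2
  have y_far : δ / 2 ≤ dist y S.infty := by
    linarith [dist_triangle_left (g (S.ι 0)) S.infty y]
  obtain ⟨v, rfl⟩ := S.range_ι.superset (dist_pos.1 ((half_pos hδ).trans_le y_far))
  have hv : v ∈ ball (S.coord g 0) (τ ^ 2 * ρ ^ 2 * δ / 256) := by
    rw [mem_ball, S.dist_eq_two_mul_dist_ι_div,
      ι_coord (hg.ne_infty hδ (mem_ball_self (half_pos hρ)))]
    calc _ ≤ 2 * dist (S.ι v) (g (S.ι 0)) / (δ / 2 * δ) := by gcongr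
      _ < 2 * (τ ^ 2 * ρ ^ 2 * δ ^ 3 / 1024) / (δ / 2 * δ) := by gcongr
      _ = τ ^ 2 * ρ ^ 2 * δ / 256 := by field_simp; ring
  obtain ⟨u, hu, rfl⟩ := hg.ball_subset_image_coord hρ hδ hτ h hv
  exact ⟨S.ι u, S.mapsTo_ι_ball 0 ρ hu, (ι_coord (hg.ne_infty hδ hu)).symm⟩

lemma ball_subset_image (hg : S.HolOmits g w ρ x₀ δ) (hρ : 0 < ρ) (hδ : 0 < δ) (hτ : 0 < τ)
    (h : ENNReal.ofReal τ ≤ ednorm g w) :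
    ball (g w) (min (δ / 2) (τ ^ 2 * ρ ^ 2 * δ ^ 3 / 1024)) ⊆ g '' ball w ρ := by
  obtain ⟨e, e', rfl, hg'⟩ := hg.exists_isometryEquiv
  rw [← ednorm_comp_isometryEquiv e e'] at h
  have rotated := hg'.ball_subset_image_of_infty hρ hδ hτ h
  rw [image_comp, image_comp, e.image_ball, comp_apply, comp_apply, ← e'.image_ball] at rotated
  exact (image_subset_image_iff e'.injective).1 rotated

end HolOmits

end SphereModel

namespace IsInvBranch

variable {𝕊 : Type} [MetricSpace 𝕊] [CompactSpace 𝕊] {S : SphereModel 𝕊} {f g g' : 𝕊 → 𝕊} {n : ℕ}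
  {U : Set 𝕊}

lemma eq_of_apply_eq (hg : IsInvBranch S f n U g) (hg' : IsInvBranch S f n U g') {w w' : 𝕊}
    (hw : w ∈ U) (hw' : w' ∈ U) (h : g w = g' w') : w = w' := by
  rw [← hg.2 w hw, h, hg'.2 w' hw']

lemma continuousOn (hg : IsInvBranch S f n U g) : ContinuousOn g U :=
  fun w hw ↦ (hg.1 w hw).1.continuousWithinAt

lemma image_mem_nhds (hg : IsInvBranch S f n U g) (hU : IsOpen U) {w : 𝕊} (hw : w ∈ U) :
    g '' U ∈ 𝓝 (g w) :=
  (hg.1 w hw).nhds_le_map_of_injOn (hU.mem_nhds hw) (fun _ hx _ hy ↦ hg.eq_of_apply_eq hg hx hy)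
    (image_mem_map (hU.mem_nhds hw))

lemma eqOn_of_apply_eq (hg : IsInvBranch S f n U g) (hg' : IsInvBranch S f n U g')
    (hUo : IsOpen U) (hUc : IsPreconnected U) {w w' : 𝕊} (hw : w ∈ U) (hw' : w' ∈ U)
    (h : g w = g' w') : EqOn g g' U := by
  obtain rfl := hg.eq_of_apply_eq hg' hw hw' h
  exact eqOn_of_isPreconnected_of_image_mem_nhds hUo hUc hg.continuousOn hg'.continuousOn
    (fun x hx ↦ hg.image_mem_nhds hUo hx) (fun x hx y hy ↦ hg.eq_of_apply_eq hg' hx hy) hw h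

lemma exists_forall_eqOn_or_le_dist (hg : IsInvBranch S f n U g) (hUo : IsOpen U)
    (hUc : IsPreconnected U) {u : 𝕊} (hu : u ∈ U) :
    ∃ δ > 0, ∀ g', IsInvBranch S f n U g' → EqOn g' g U ∨ ∀ w ∈ U, δ ≤ dist (g' w) (g u) := by
  obtain ⟨δ, hδ, ball_subset⟩ := Metric.mem_nhds_iff.1 (hg.image_mem_nhds hUo hu)
  refine ⟨δ, hδ, fun g' hg' ↦ or_iff_not_imp_right.2 fun close ↦ ?_⟩
  push Not at close
  obtain ⟨w, hw, hwu⟩ := close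
  obtain ⟨w', hw', h⟩ := ball_subset hwu
  exact hg'.eqOn_of_apply_eq hg hUo hUc hw hw' h.symm

end IsInvBranch

section Uniform

variable {𝕊 : Type} [MetricSpace 𝕊] [CompactSpace 𝕊] (S : SphereModel 𝕊) (f : 𝕊 → 𝕊) (n : ℕ)
  {U : Set 𝕊}

lemma exists_forall_isInvBranch_holOmits (hUo : IsOpen U) (hUc : IsPreconnected U) {K : Set 𝕊}
    (hK : IsCompact K) (hKU : K ⊆ U) :
    ∃ ρ > 0, ∃ δ > 0, (∀ w ∈ K, ball w ρ ⊆ U) ∧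
      ∀ g, IsInvBranch S f n U g → ∀ w ∈ K, ∃ x₀, S.HolOmits g w ρ x₀ δ := by
  obtain ⟨ρ₀, hρ₀, thickening_subset⟩ := hK.exists_thickening_subset_open hUo hKU
  have ball_subset (w : 𝕊) (hw : w ∈ K) : ball w ρ₀ ⊆ U :=
    (ball_subset_thickening hw ρ₀).trans thickening_subset
  by_cases h : ∃ g₁ u, IsInvBranch S f n U g₁ ∧ u ∈ K
  swap
  · exact ⟨ρ₀, hρ₀, 1, one_pos, ball_subset, fun g hg w hw ↦ (h ⟨g, w, hg, hw⟩).elim⟩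
  obtain ⟨g₁, u, hg₁, hu⟩ := h
  obtain ⟨δ, hδ, eqOn_or_far⟩ := hg₁.exists_forall_eqOn_or_le_dist hUo hUc (hKU hu)
  obtain ⟨ρ₁, hρ₁, g₁_omits⟩ := S.exists_forall_mem_ball_one_le_dist hK
    fun w hw ↦ (hg₁.1 w (hKU hw)).1
  have ball_min_subset (w : 𝕊) (hw : w ∈ K) : ball w (min ρ₀ ρ₁) ⊆ U :=
    (ball_subset_ball (min_le_left _ _)).trans (ball_subset w hw)
  refine ⟨min ρ₀ ρ₁, lt_min hρ₀ hρ₁, min δ 1, lt_min hδ one_pos, ball_min_subset,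
    fun g hg w hw ↦ ?_⟩
  rcases eqOn_or_far g hg with eqOn | far
  · obtain ⟨x₀, hx₀⟩ := g₁_omits w hw
    refine ⟨x₀, fun x hx ↦ ⟨hg.1 x (ball_min_subset w hw hx), (min_le_right _ _).trans ?_⟩⟩
    rw [eqOn (ball_min_subset w hw hx)]
    exact hx₀ x (ball_subset_ball (min_le_right _ _) hx)
  · exact ⟨g₁ u, fun x hx ↦ ⟨hg.1 x (ball_min_subset w hw hx),
      (min_le_left _ _).trans (far x (ball_min_subset w hw hx))⟩⟩

variable {A : Set 𝕊}

lemma exists_forall_isInvBranch_ednorm_le (hUo : IsOpen U) (hUc : IsPreconnected U)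
    (hAU : closure A ⊆ U) :
    ∃ C : ℝ≥0, ∀ g, IsInvBranch S f n U g → ∀ w ∈ A, ednorm g w ≤ C := by
  obtain ⟨ρ, hρ, δ, hδ, -, omits⟩ :=
    exists_forall_isInvBranch_holOmits S f n hUo hUc isClosed_closure.isCompact hAU
  refine ⟨(8 / (δ * ρ)).toNNReal, fun g hg w hw ↦ ?_⟩
  obtain ⟨x₀, hx₀⟩ := omits g hg w (subset_closure hw)
  exact hx₀.ednorm_le hρ hδ

lemma finite_restrict_isInvBranch_le_ednorm (hUo : IsOpen U) (hUc : IsPreconnected U)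
    (hAU : closure A ⊆ U) {τ : ℝ} (hτ : 0 < τ) :
    {g₀ : A → 𝕊 | ∃ g, IsInvBranch S f n U g ∧ (∀ w : A, g₀ w = g w) ∧
      ∃ w ∈ A, ENNReal.ofReal τ ≤ ednorm g w}.Finite := by
  obtain ⟨ρ, hρ, δ, hδ, ball_subset, omits⟩ :=
    exists_forall_isInvBranch_holOmits S f n hUo hUc isClosed_closure.isCompact hAU
  have radius_pos : 0 < min (δ / 2) (τ ^ 2 * ρ ^ 2 * δ ^ 3 / 1024) := by positivity
  let IsValue (g₀ : A → 𝕊) (x : 𝕊) : Prop := ∃ g, IsInvBranch S f n U g ∧ (∀ w : A, g₀ w = g w) ∧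
    ∃ w ∈ A, ENNReal.ofReal τ ≤ ednorm g w ∧ g w = x
  refine (finite_of_exists_of_eq_of_dist_lt (P := IsValue) radius_pos ?_).subset ?_
  · rintro g₀ g₀' _ _ ⟨g, hg, hg₀, w, hw, hτw, rfl⟩ ⟨g', hg', hg₀', w', hw', -, rfl⟩ close
    obtain ⟨x₀, hx₀⟩ := omits g hg w (subset_closure hw)
    obtain ⟨u, hu, hgu⟩ := hx₀.ball_subset_image hρ hδ hτ hτw (mem_ball'.2 close)
    have eqOn : EqOn g g' U := hg.eqOn_of_apply_eq hg' hUo hUc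
      (ball_subset w (subset_closure hw) hu) (hAU (subset_closure hw')) hgu
    funext a
    rw [hg₀, hg₀', eqOn (hAU (subset_closure a.2))]
  · rintro g₀ ⟨g, hg, hg₀, w, hw, hτw⟩
    exact ⟨g w, g, hg, hg₀, w, hw, hτw, rfl⟩

end Uniform

theorem inverse_branch_derivative_bounds_general {𝕊 : Type} [MetricSpace 𝕊] [CompactSpace 𝕊]
    (S : SphereModel 𝕊) (f : 𝕊 → 𝕊) {U A : Set 𝕊} (hUo : IsOpen U) (hUc : IsPreconnected U)
    (hAU : closure A ⊆ U) {τ : ℝ} (hτ : 0 < τ) (N : ℕ) :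
    ∃ M > 0,
      (∀ n ≤ N, ∀ g : 𝕊 → 𝕊, IsInvBranch S f n U g →
        ∀ w ∈ A, ednorm g w < ENNReal.ofReal M) ∧
      Set.Finite {g₀ : A → 𝕊 | ∃ n ≤ N, ∃ g : 𝕊 → 𝕊,
        IsInvBranch S f n U g ∧ (∀ w : A, g₀ w = g w) ∧
        ∃ w ∈ A, ENNReal.ofReal τ ≤ ednorm g w} := by
  choose C hC using fun n ↦ exists_forall_isInvBranch_ednorm_le S f n hUo hUc hAU
  refine ⟨(Finset.range (N + 1)).sup C + 1, by positivity, fun n hn g hg w hw ↦ ?_, ?_⟩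
  · have C_le : C n ≤ (Finset.range (N + 1)).sup C :=
      Finset.le_sup (Finset.mem_range_succ_iff.2 hn)
    rw [← NNReal.coe_one, ← NNReal.coe_add, ENNReal.ofReal_coe_nnreal]
    exact (hC n g hg w hw).trans_lt (by exact_mod_cast C_le.trans_lt (lt_add_one _))
  · refine ((finite_Iic N).biUnion fun n _ ↦
      finite_restrict_isInvBranch_le_ednorm S f n hUo hUc hAU hτ).subset ?_
    rintro g₀ ⟨n, hn, hg₀⟩
    exact mem_biUnion hn hg₀

/-- **Lemma 2.2.** For `0 < r < R` and `N ≥ 1`, the spherical derivatives of all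
holomorphic inverse branches of `f^{-n}`, `n ≤ N`, on `B(z,R)` are uniformly bounded on
`B(z,r)`; moreover all but finitely many of these branches have derivative smaller
than `τ` on `B(z,r)`. -/
theorem inverse_branch_derivative_bounds {𝕊 : Type} [MetricSpace 𝕊] [CompactSpace 𝕊]
    (S : SphereModel 𝕊) (f : 𝕊 → 𝕊) (hf : S.MeroOrRat f)
    (z : 𝕊) (R τ r : ℝ) (hR : 0 < R) (hτ : 0 < τ) (N : ℕ) (hN : 1 ≤ N)
    (hr : 0 < r) (hrR : r < R) :
    ∃ M > 0,
      (∀ n ≤ N, ∀ g : 𝕊 → 𝕊, IsInvBranch S f n (Metric.ball z R) g →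
        ∀ w ∈ Metric.ball z r, ednorm g w < ENNReal.ofReal M) ∧
      Set.Finite {g₀ : Metric.ball z r → 𝕊 | ∃ n ≤ N, ∃ g : 𝕊 → 𝕊,
        IsInvBranch S f n (Metric.ball z R) g ∧ (∀ w : Metric.ball z r, g₀ w = g w) ∧
        ∃ w ∈ Metric.ball z r, ENNReal.ofReal τ ≤ ednorm g w} := by
  exact inverse_branch_derivative_bounds_general S f isOpen_ball (S.isPreconnected_ball z R)
    (closure_ball_subset_closedBall.trans (closedBall_subset_ball hrR)) hτ N
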